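/- Let U be a real Hilbert space, V a real normed vector space, B : U × U → ℝ a continuous symmetric bilinear form satisfying B(u,u) ≥ 0 for all u ∈ U, and K : U → V a compact continuous linear operator. Assume (i) a Gårding-type inequality holds: there exist constants α₀ > 0 and α₁ > 0 such that α₀‖u‖² ≤ B(u,u) + α₁‖K u‖² for all u ∈ U; and (ii) B has trivial kernel on the diagonal: B(u,u) = 0 implies u = 0. Then B is coercive: there exists a constant c > 0 such that c‖u‖² ≤ B(u,u) for all u ∈ U. -/

import Mathlib

open Filter Topology

/-- Abstract coercivity theorem: a continuous symmetric nonnegative bilinear form on a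
real Hilbert space satisfying a Gårding-type inequality (with compact perturbation term)
and having trivial kernel on the diagonal is coercive. -/
theorem garding_compact_trivialKernel_coercive
    {U V : Type*} [NormedAddCommGroup U] [InnerProductSpace ℝ U] [CompleteSpace U]
    [NormedAddCommGroup V] [NormedSpace ℝ V]
    (B : U →L[ℝ] U →L[ℝ] ℝ)
    (hsymm : ∀ u v : U, B u v = B v u)
    (hnonneg : ∀ u : U, 0 ≤ B u u)
    (K : U →L[ℝ] V) (hK : IsCompactOperator K)
    (α₀ α₁ : ℝ) (hα₀ : 0 < α₀) (hα₁ : 0 < α₁)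
    (hGarding : ∀ u : U, α₀ * ‖u‖ ^ 2 ≤ B u u + α₁ * ‖K u‖ ^ 2)
    (hker : ∀ u : U, B u u = 0 → u = 0) :
    ∃ c > 0, ∀ u : U, c * ‖u‖ ^ 2 ≤ B u u := by
  by_contra! hcon
  have hseq : ∀ n : ℕ, ∃ u : U, ‖u‖ = 1 ∧ B u u < 1 / ((n : ℝ) + 1) := by
    intro n
    obtain ⟨u, hu⟩ := hcon (1 / ((n : ℝ) + 1)) (by positivity)
    have hu0 : u ≠ 0 := by
      rintro rfl
      simp at hu
    have hn : 0 < ‖u‖ := norm_pos_iff.mpr hu0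
    refine ⟨‖u‖⁻¹ • u, ?_, ?_⟩
    · rw [norm_smul, norm_inv, norm_norm, inv_mul_cancel₀ hn.ne']
    · have h1 : B (‖u‖⁻¹ • u) (‖u‖⁻¹ • u) = B u u / ‖u‖ ^ 2 := by
        simp only [map_smul, ContinuousLinearMap.smul_apply, smul_eq_mul]
        field_simp
      rw [h1, div_lt_iff₀ (by positivity)]
      exact hu
  choose u hu1 hu2 using hseq
  have hb : Tendsto (fun n => B (u n) (u n)) atTop (𝓝 0) :=
    squeeze_zero (fun n => hnonneg _) (fun n => (hu2 n).le)
      tendsto_one_div_add_atTop_nhds_zero_nat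
  obtain ⟨S, hS, hsub⟩ :=
    IsCompactOperator.image_closedBall_subset_compact (f := (K : U →ₗ[ℝ] V)) hK 1
  obtain ⟨a, -, φ, hφ, hlim⟩ := hS.tendsto_subseq (x := fun n => K (u n))
    (fun n => hsub ⟨u n, by simp [hu1 n], rfl⟩)
  have hbφ : Tendsto (fun n => B (u (φ n)) (u (φ n))) atTop (𝓝 0) :=
    hb.comp hφ.tendsto_atTop
  have hpar : ∀ x y : U, B (x - y) (x - y) ≤ 2 * B x x + 2 * B y y := by
    intro x y
    have h := hnonneg (x + y)
    simp only [map_add, map_sub, ContinuousLinearMap.add_apply,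
      ContinuousLinearMap.sub_apply] at h ⊢
    linarith
  have hcau : CauchySeq (fun n => u (φ n)) := by
    rw [cauchySeq_iff_tendsto_dist_atTop_0]
    have hKc := cauchySeq_iff_tendsto_dist_atTop_0.mp hlim.cauchySeq
    have hf : Tendsto (fun p : ℕ × ℕ => B (u (φ p.1)) (u (φ p.1))) atTop (𝓝 0) := by
      rw [← prod_atTop_atTop_eq]
      exact hbφ.comp tendsto_fst
    have hs : Tendsto (fun p : ℕ × ℕ => B (u (φ p.2)) (u (φ p.2))) atTop (𝓝 0) := by
      rw [← prod_atTop_atTop_eq]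
      exact hbφ.comp tendsto_snd
    have hR := ((((hf.const_mul 2).add (hs.const_mul 2)).add
      ((hKc.pow 2).const_mul α₁)).div_const α₀).sqrt
    simp only [mul_zero, add_zero, ne_eq, OfNat.ofNat_ne_zero, not_false_eq_true, zero_pow,
      zero_div, Real.sqrt_zero] at hR
    refine squeeze_zero (fun _ => dist_nonneg) (fun p => ?_) hR
    apply Real.le_sqrt_of_sq_le
    rw [le_div_iff₀ hα₀, dist_eq_norm]
    have h1 := hGarding (u (φ p.1) - u (φ p.2))
    have h2 := hpar (u (φ p.1)) (u (φ p.2))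
    have h3 : dist (((fun n => K (u n)) ∘ φ) p.1) (((fun n => K (u n)) ∘ φ) p.2)
        = ‖K (u (φ p.1) - u (φ p.2))‖ := by
      rw [dist_eq_norm, map_sub]; rfl
    rw [h3]
    linarith
  obtain ⟨w, hw⟩ := cauchySeq_tendsto_of_complete hcau
  have hw1 : ‖w‖ = 1 := by
    refine tendsto_nhds_unique hw.norm ?_
    simp [hu1]
  have hcont : Continuous (fun x : U => B x x) := by fun_prop
  have hw0 : B w w = 0 := tendsto_nhds_unique ((hcont.tendsto w).comp hw) hbφ
  rw [hker w hw0] at hw1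
  simp at hw1
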